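/- Let f : 𝔹 → ℂ be holomorphic with f(0) = 1, let F(x) = f(x)·x, and assume ‖F‖_B = 1, where ‖F‖_B = ‖F(0)‖ + sup_{x ∈ 𝔹, x ≠ 0} (1−‖x‖²)·‖DF(x)x‖/‖x‖. Then F is biholomorphic on the ball B_{1/√3} = {x ∈ X : ‖x‖ < 1/√3} and F(B_{1/√3}) contains the ball B_{√3/4} = {y ∈ X : ‖y‖ < √3/4}. -/

import Mathlib

open Metric Set

noncomputable section

/-- A holomorphic map is biholomorphic on an open set `s` if it is holomorphic and injective
on `s` and admits a holomorphic inverse on the image `f '' s`. -/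
def IsBiholoOn {E₁ E₂ : Type*} [NormedAddCommGroup E₁] [NormedSpace ℂ E₁]
    [NormedAddCommGroup E₂] [NormedSpace ℂ E₂] (f : E₁ → E₂) (s : Set E₁) : Prop :=
  DifferentiableOn ℂ f s ∧ Set.InjOn f s ∧
    ∃ g : E₂ → E₁, DifferentiableOn ℂ g (f '' s) ∧ ∀ x ∈ s, g (f x) = x

/-- The Bloch (semi-)norm `‖F‖_B = ‖F(0)‖ + sup_{x ∈ 𝔹, x ≠ 0} (1−‖x‖²)‖DF(x)x‖/‖x‖`
of a holomorphic mapping on the unit ball. -/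
def blochNorm {X : Type*} [NormedAddCommGroup X] [NormedSpace ℂ X] (F : X → X) : ℝ :=
  ‖F 0‖ + ⨆ x : {x : X // x ∈ ball (0 : X) 1 ∧ x ≠ 0},
    (1 - ‖x.1‖ ^ 2) * ‖fderiv ℂ F x.1 x.1‖ / ‖x.1‖

open Metric Set Filter Topology ComplexConjugate

lemma pick_id (a b : ℂ) :
    ‖1 - conj a * b‖ ^ 2 - ‖b - a‖ ^ 2 = (1 - ‖a‖ ^ 2) * (1 - ‖b‖ ^ 2) := by
  simp only [Complex.sq_norm, Complex.normSq_apply]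
  simp
  ring

lemma pick_ne {a b : ℂ} (ha : ‖a‖ < 1) (hb : ‖b‖ ≤ 1) : 1 - conj a * b ≠ 0 := by
  intro h
  have h1 : conj a * b = 1 := (sub_eq_zero.mp h).symm
  have h2 : ‖a‖ * ‖b‖ = 1 := by
    have := congrArg norm h1
    simpa using this
  nlinarith [norm_nonneg a, norm_nonneg b]

lemma pick_le {a b : ℂ} (ha : ‖a‖ < 1) (hb : ‖b‖ ≤ 1) : ‖(b - a) / (1 - conj a * b)‖ ≤ 1 := by
  have h0 : 0 < ‖1 - conj a * b‖ := norm_pos_iff.mpr (pick_ne ha hb)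
  rw [norm_div, div_le_one h0]
  have := pick_id a b
  have h1 : 0 ≤ (1 - ‖a‖ ^ 2) * (1 - ‖b‖ ^ 2) := by
    apply mul_nonneg <;> nlinarith [norm_nonneg a, norm_nonneg b]
  nlinarith [norm_nonneg (b - a)]

lemma pick_lt {a b : ℂ} (ha : ‖a‖ < 1) (hb : ‖b‖ < 1) : ‖(b - a) / (1 - conj a * b)‖ < 1 := by
  have h0 : 0 < ‖1 - conj a * b‖ := norm_pos_iff.mpr (pick_ne ha hb.le)
  rw [norm_div, div_lt_one h0]
  have := pick_id a b
  have h1 : 0 < (1 - ‖a‖ ^ 2) * (1 - ‖b‖ ^ 2) := by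
    apply mul_pos <;> nlinarith [norm_nonneg a, norm_nonneg b]
  nlinarith [norm_nonneg (b - a)]

lemma schwarz_pick {G : ℂ → ℂ} (hG : DifferentiableOn ℂ G (ball 0 1))
    (hb : ∀ z ∈ ball (0:ℂ) 1, ‖G z‖ ≤ 1) {s t : ℂ} (hs : ‖s‖ < 1) (ht : ‖t‖ < 1)
    (hGt : ‖G t‖ < 1) :
    (1 - ‖t‖ ^ 2) * (1 - ‖s‖ ^ 2) * ‖1 - conj (G t) * G s‖ ^ 2 ≤
      (1 - ‖G t‖ ^ 2) * (1 - ‖G s‖ ^ 2) * ‖1 - conj t * s‖ ^ 2 := by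
  set T : ℂ → ℂ := fun z => (z - (-t)) / (1 - conj (-t) * z) with hT
  have hTm : ∀ z ∈ ball (0:ℂ) 1, T z ∈ ball (0:ℂ) 1 := fun z hz => by
    rw [mem_ball_zero_iff] at hz ⊢
    exact pick_lt (by simpa using ht) hz
  have hTd : DifferentiableOn ℂ T (ball 0 1) := by
    apply DifferentiableOn.div (by fun_prop) (by fun_prop)
    intro z hz
    rw [mem_ball_zero_iff] at hz
    exact pick_ne (by simpa using ht) hz.le
  have hGT : DifferentiableOn ℂ (fun z => G (T z)) (ball 0 1) := hG.comp hTd hTm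
  set k : ℂ → ℂ := fun z => (G (T z) - G t) / (1 - conj (G t) * G (T z)) with hk
  have hkd : DifferentiableOn ℂ k (ball 0 1) := by
    apply DifferentiableOn.div (hGT.sub_const _) ((hGT.const_mul _).const_sub _)
    intro z hz
    exact pick_ne hGt (hb _ (hTm z hz))
  have hk0 : k 0 = 0 := by simp [hk, hT]
  have hkm : MapsTo k (ball 0 1) (closedBall 0 1) := fun z hz => by
    rw [mem_closedBall_zero_iff]
    exact pick_le hGt (hb _ (hTm z hz))
  set z := (s - t) / (1 - conj t * s) with hz
  have hz1 : ‖z‖ < 1 := pick_lt ht hs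
  have h1 := pick_ne ht hs.le
  have hTz : T z = s := by
    have h2 := pick_ne (a := -t) (by simpa using ht) hz1.le
    rw [hT]
    simp only
    rw [div_eq_iff h2]
    have hz' : z * (1 - conj t * s) = s - t := by rw [hz, div_mul_cancel₀ _ h1]
    simp only [map_neg]
    linear_combination hz'
  have key := Complex.norm_le_norm_of_mapsTo_ball hkd hkm hk0 hz1
  have hkz : k z = (G s - G t) / (1 - conj (G t) * G s) := by simp only [hk, hTz]
  have hGs := hb s (by simpa using hs)
  rw [hkz, hz, norm_div, norm_div, div_le_div_iff₀ (norm_pos_iff.mpr (pick_ne hGt hGs)) (norm_pos_iff.mpr h1)] at key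
  have key2 := pow_le_pow_left₀ (by positivity) key 2
  rw [mul_pow, mul_pow] at key2
  have e1 := pick_id (G t) (G s)
  have e2 := pick_id t s
  rw [← e1, ← e2]
  nlinarith

lemma julia {G : ℂ → ℂ} (hG : DifferentiableOn ℂ G (ball 0 1))
    (hb : ∀ z ∈ ball (0:ℂ) 1, ‖G z‖ ≤ 1) (h1 : G 1 = 1) {g' : ℂ} (hg : HasDerivAt G g' 1)
    (hg' : g'.re = 1) {s : ℝ} (hs0 : -1 < s) (hs1 : s < 1) : s ≤ (G s).re := by
  have hreal : HasDerivAt (fun t : ℝ => G t) g' 1 := by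
    have : HasDerivAt G g' ((1:ℝ):ℂ) := by simpa using hg
    exact this.comp_ofReal
  have hsq : HasDerivAt (fun t : ℝ => ‖G t‖ ^ 2) 2 1 := by
    have := hreal.norm_sq
    convert this using 1
    simp [h1, hg', Complex.inner]
  have hlim : Tendsto (fun t : ℝ => (1 - ‖G t‖ ^ 2) / (1 - t)) (𝓝[<] 1) (𝓝 2) := by
    have := (hasDerivAt_iff_tendsto_slope.mp hsq).mono_left
      (nhdsWithin_mono (1:ℝ) (fun x (hx : x < 1) => (ne_of_lt hx : x ≠ 1)))
    refine this.congr fun t => ?_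
    rw [slope_def_field]
    simp only [Complex.ofReal_one, h1, norm_one, one_pow]
    rw [← neg_sub, ← neg_sub 1 t, neg_div_neg_eq]
  have hpos : ∀ᶠ t : ℝ in 𝓝[<] 1, 0 < (1 - ‖G t‖ ^ 2) / (1 - t) :=
    hlim.eventually (lt_mem_nhds (by norm_num))
  have hns : ‖(s:ℂ)‖ < 1 := by
    rw [Complex.norm_real, Real.norm_eq_abs, abs_lt]; exact ⟨hs0, hs1⟩
  have hev : ∀ᶠ t : ℝ in 𝓝[<] 1,
      (1 + t) * (1 - s ^ 2) * ‖1 - conj (G t) * G s‖ ^ 2 ≤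
      (1 - ‖G t‖ ^ 2) / (1 - t) * (1 - ‖G s‖ ^ 2) * (1 - t * s) ^ 2 := by
    have h0 : ∀ᶠ t : ℝ in 𝓝[<] 1, 0 < t :=
      (lt_mem_nhds (by norm_num : (0:ℝ) < 1)).filter_mono nhdsWithin_le_nhds
    filter_upwards [hpos, self_mem_nhdsWithin, h0] with t ht1 ht2 ht3
    have ht2 : t < 1 := ht2
    have ht4 : 0 < 1 - t := by linarith
    have hGt : ‖G t‖ < 1 := by
      have : 0 < 1 - ‖G t‖ ^ 2 := by
        rw [lt_div_iff₀ ht4] at ht1; linarith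
      nlinarith [norm_nonneg (G t)]
    have hnt : ‖(t:ℂ)‖ < 1 := by
      rw [Complex.norm_real, Real.norm_eq_abs, abs_lt]; constructor <;> linarith
    have := schwarz_pick hG hb hns hnt hGt
    have e : ‖1 - conj (t:ℂ) * s‖ ^ 2 = (1 - t * s) ^ 2 := by
      rw [Complex.conj_ofReal]
      have : (1 - (t:ℂ) * s) = ((1 - t * s : ℝ) : ℂ) := by push_cast; ring
      rw [this, Complex.norm_real, Real.norm_eq_abs, sq_abs]
    rw [e] at this
    simp only [Complex.norm_real, Real.norm_eq_abs, sq_abs] at this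
    rw [div_mul_eq_mul_div, div_mul_eq_mul_div, le_div_iff₀ ht4]
    calc _ = (1 - t ^ 2) * (1 - s ^ 2) * ‖1 - conj (G t) * G s‖ ^ 2 := by ring
      _ ≤ _ := this
  have hGc : Tendsto (fun t : ℝ => G t) (𝓝[<] 1) (𝓝 1) := by
    have := hreal.continuousAt.tendsto.mono_left (nhdsWithin_le_nhds (s := Iio 1))
    simpa [h1] using this
  have hid : Tendsto (fun t : ℝ => t) (𝓝[<] 1) (𝓝 1) := tendsto_id.mono_left nhdsWithin_le_nhds
  have hconj : Tendsto (fun t : ℝ => conj (G t)) (𝓝[<] 1) (𝓝 1) := by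
    have := (Complex.continuous_conj.tendsto 1).comp hGc
    simpa [Function.comp_def] using this
  have L := ((hid.const_add 1).mul_const (1 - s ^ 2)).mul
    ((((hconj.mul_const (G s)).const_sub 1).norm).pow 2)
  have R := (hlim.mul_const (1 - ‖G s‖ ^ 2)).mul (((hid.mul_const s).const_sub 1).pow 2)
  have fin := le_of_tendsto_of_tendsto L R hev
  have hGs := hb s (by simpa using hns)
  have hre : (G s).re ≤ 1 := (Complex.re_le_norm _).trans hGs
  simp only [Complex.sq_norm, Complex.normSq_apply] at fin
  simp at fin
  by_contra hcon
  push Not at hcon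
  set a := (G s).re
  set b := (G s).im
  have : (1 - a) * (a - s) ≥ b * b := by
    have h3 : 0 < 1 - s := by linarith
    have h4 : 0 ≤ (1 - s) * (2 * ((1 - a) * (a - s) - b * b)) := by nlinarith
    have := nonneg_of_mul_nonneg_right h4 h3
    linarith
  nlinarith [mul_self_nonneg b]

lemma zmap_norm (s : ℂ) (hs : ‖s‖ ≤ 1) :
    1 - ‖(Real.sqrt 3 : ℂ) * (1 - s) / (3 - s)‖ ^ 2 = (6 - 2 * ‖s‖ ^ 2) / ‖3 - s‖ ^ 2 := by
  have h3 : (3 - s) ≠ 0 := by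
    intro h
    have : s = 3 := (sub_eq_zero.mp h).symm
    rw [this] at hs
    norm_num at hs
  have h4 : ‖3 - s‖ ≠ 0 := norm_ne_zero_iff.mpr h3
  rw [norm_div, norm_mul, div_pow, mul_pow, Complex.norm_real, Real.norm_eq_abs, sq_abs,
    Real.sq_sqrt (by norm_num)]
  rw [eq_div_iff (pow_ne_zero 2 h4), sub_mul, div_mul_cancel₀ _ (pow_ne_zero 2 h4)]
  simp only [Complex.sq_norm, Complex.normSq_apply]
  simp
  ring

lemma re_deriv_zero {h : ℂ → ℂ} (hh : DifferentiableOn ℂ h (ball 0 1)) (h0 : h 0 = 1)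
    (hb : ∀ z ∈ ball (0:ℂ) 1, (1 - ‖z‖ ^ 2) * ‖h z‖ ≤ 1) : (deriv h 0).re = 0 := by
  have hd : HasDerivAt h (deriv h 0) 0 :=
    (hh.differentiableAt (isOpen_ball.mem_nhds (by simp))).hasDerivAt
  have hreal : HasDerivAt (fun t : ℝ => h t) (deriv h 0) 0 := by
    have : HasDerivAt h (deriv h 0) ((0:ℝ):ℂ) := by simpa using hd
    exact this.comp_ofReal
  have hsq := hreal.norm_sq
  have hq : HasDerivAt (fun t : ℝ => (1 - t ^ 2) ^ 2) 0 0 := by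
    have := (((hasDerivAt_id (0:ℝ)).pow 2).const_sub 1).pow 2
    refine HasDerivAt.congr_deriv this ?_
    simp
  have hm := hq.mul hsq
  have hmax : IsLocalMax (fun t : ℝ => (1 - t ^ 2) ^ 2 * ‖h t‖ ^ 2) 0 := by
    have : ∀ᶠ t : ℝ in 𝓝 0, t ∈ ball (0:ℝ) 1 := isOpen_ball.mem_nhds (by simp)
    filter_upwards [this] with t ht
    have ht' : ‖t‖ < 1 := by simpa using ht
    have := hb t (by simpa using ht')
    rw [Complex.norm_real, Real.norm_eq_abs, sq_abs] at this
    have ht2 : 0 ≤ 1 - t ^ 2 := by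
      rw [Real.norm_eq_abs] at ht'
      have := sq_lt_one_iff_abs_lt_one t |>.mpr ht'
      linarith
    simp only [Complex.ofReal_zero, h0]
    rw [← mul_pow]
    have := pow_le_one₀ (n := 2) (by positivity) this
    simpa using this
  have := hmax.hasDerivAt_eq_zero hm
  simpa [h0, Complex.inner] using this

lemma bonk {h : ℂ → ℂ} (hh : DifferentiableOn ℂ h (ball 0 1)) (h0 : h 0 = 1)
    (hb : ∀ z ∈ ball (0:ℂ) 1, (1 - ‖z‖ ^ 2) * ‖h z‖ ≤ 1) {s : ℝ} (hs0 : -1 < s) (hs1 : s < 1) :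
    s ≤ (h (Real.sqrt 3 * (1 - s) / (3 - s) : ℝ)).re * (4 / (3 - s) ^ 2) := by
  set Z : ℂ → ℂ := fun s => (Real.sqrt 3 : ℂ) * (1 - s) / (3 - s) with hZ
  have hne : ∀ s : ℂ, ‖s‖ ≤ 1 → 3 - s ≠ 0 := by
    intro s hs h
    have : s = 3 := (sub_eq_zero.mp h).symm
    rw [this] at hs
    norm_num at hs
  have hZb : ∀ s : ℂ, ‖s‖ ≤ 1 → Z s ∈ ball (0:ℂ) 1 := by
    intro s hs
    have e := zmap_norm s hs
    have h4 : 0 < ‖3 - s‖ := norm_pos_iff.mpr (hne s hs)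
    have : 0 < (6 - 2 * ‖s‖ ^ 2) / ‖3 - s‖ ^ 2 := by
      apply div_pos _ (by positivity)
      nlinarith [norm_nonneg s]
    rw [mem_ball_zero_iff]
    rw [← e] at this
    have h5 := norm_nonneg (Z s)
    simp only [hZ] at h5 ⊢
    nlinarith
  set G : ℂ → ℂ := fun s => h (Z s) * (4 / (3 - s) ^ 2) with hGdef
  have hZd : ∀ s : ℂ, ‖s‖ ≤ 1 → HasDerivAt Z (-2 * Real.sqrt 3 / (3 - s) ^ 2) s := by
    intro s hs
    have := (((hasDerivAt_id s).const_sub 1).const_mul (Real.sqrt 3 : ℂ)).div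
      ((hasDerivAt_id s).const_sub 3) (hne s hs)
    refine HasDerivAt.congr_deriv this ?_
    simp only [id]
    congr 1
    ring
  have hqd : ∀ s : ℂ, ‖s‖ ≤ 1 → HasDerivAt (fun s : ℂ => 4 / (3 - s) ^ 2) (8 / (3 - s) ^ 3) s := by
    intro s hs
    have h3 := hne s hs
    have := (hasDerivAt_const s (4:ℂ)).div (((hasDerivAt_id s).const_sub 3).pow 2)
      (pow_ne_zero 2 h3)
    refine HasDerivAt.congr_deriv this ?_
    simp only [id]
    simp
    field_simp
    ring
  have hGd : ∀ s : ℂ, ‖s‖ ≤ 1 → HasDerivAt G (deriv h (Z s) * (-2 * Real.sqrt 3 / (3 - s) ^ 2)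
      * (4 / (3 - s) ^ 2) + h (Z s) * (8 / (3 - s) ^ 3)) s := by
    intro s hs
    have h1 : HasDerivAt h (deriv h (Z s)) (Z s) :=
      (hh.differentiableAt (isOpen_ball.mem_nhds (hZb s hs))).hasDerivAt
    exact (h1.comp s (hZd s hs)).mul (hqd s hs)
  have hGcl : DiffContOnCl ℂ G (ball 0 1) := by
    apply DifferentiableOn.diffContOnCl
    rw [closure_ball _ one_ne_zero]
    intro s hs
    exact (hGd s (by simpa using hs)).differentiableAt.differentiableWithinAt
  have hGb : ∀ z ∈ ball (0:ℂ) 1, ‖G z‖ ≤ 1 := by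
    intro z hz
    refine Complex.norm_le_of_forall_mem_frontier_norm_le isBounded_ball hGcl ?_
      (subset_closure hz)
    intro s hs
    rw [frontier_ball _ one_ne_zero] at hs
    have hs1 : ‖s‖ = 1 := by simpa using hs
    have e := zmap_norm s hs1.le
    have := hb _ (hZb s hs1.le)
    simp only [hZ] at this
    rw [e, hs1] at this
    simp only [hGdef, hZ, norm_mul, norm_div, norm_pow]
    norm_num at this ⊢
    rw [norm_div, norm_mul] at *
    simp only [Complex.norm_real] at *
    linarith
  have hZ1 : Z 1 = 0 := by simp [hZ]
  have hG1 : G 1 = 1 := by simp only [hGdef, hZ1, h0]; norm_num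
  have hre := re_deriv_zero hh h0 hb
  have fin := julia (hGcl.differentiableOn) hGb hG1 (hGd 1 (by simp)) (by
    rw [hZ1, h0]
    have : deriv h 0 * (-2 * (Real.sqrt 3 : ℂ) / (3 - 1) ^ 2) * (4 / (3 - 1) ^ 2) +
      1 * (8 / (3 - 1) ^ 3) = deriv h 0 * ((-2 * Real.sqrt 3 / 4 : ℝ) : ℂ) + 1 := by
      push_cast; norm_num
    rw [this, Complex.add_re, Complex.re_mul_ofReal, hre]
    simp) hs0 hs1
  have e : G s = h (Real.sqrt 3 * (1 - s) / (3 - s) : ℝ) * ((4 / (3 - s) ^ 2 : ℝ) : ℂ) := by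
    simp only [hGdef, hZ]; push_cast; rfl
  rwa [e, Complex.re_mul_ofReal] at fin

lemma bonk_pos {h : ℂ → ℂ} (hh : DifferentiableOn ℂ h (ball 0 1)) (h0 : h 0 = 1)
    (hb : ∀ z ∈ ball (0:ℂ) 1, (1 - ‖z‖ ^ 2) * ‖h z‖ ≤ 1) {z : ℂ} (hz : ‖z‖ < 1 / Real.sqrt 3) :
    0 < (h z).re := by
  rcases eq_or_ne z 0 with rfl | hz0
  · simp [h0]
  set r := ‖z‖ with hr
  have hr0 : 0 < r := norm_pos_iff.mpr hz0
  set u : ℂ := z / r with hu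
  have hrc : (r:ℂ) ≠ 0 := by exact_mod_cast hr0.ne'
  have hun : ‖u‖ = 1 := by
    rw [hu, norm_div, Complex.norm_real, norm_norm, div_self hr0.ne']
  have hm : ∀ w ∈ ball (0:ℂ) 1, u * w ∈ ball (0:ℂ) 1 := by
    intro w hw; simpa [hun] using hw
  have hh' : DifferentiableOn ℂ (fun w => h (u * w)) (ball 0 1) :=
    hh.comp (by fun_prop) hm
  have q : 0 < Real.sqrt 3 := by positivity
  have qq : Real.sqrt 3 * Real.sqrt 3 = 3 := Real.mul_self_sqrt (by norm_num)
  have hq1 : Real.sqrt 3 * r < 1 := by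
    rw [lt_div_iff₀ q] at hz; linarith
  have hq2 : r < Real.sqrt 3 := by nlinarith
  set s := (Real.sqrt 3 - 3 * r) / (Real.sqrt 3 - r) with hs
  have hd : 0 < Real.sqrt 3 - r := by linarith
  have hs0 : 0 < s := div_pos (by nlinarith) hd
  have hs1 : s < 1 := by rw [hs, div_lt_one hd]; linarith
  have key := bonk hh' (by simpa using h0) (fun w hw => by
    have := hb _ (hm w hw); simpa [hun] using this) (by linarith) hs1
  have e : Real.sqrt 3 * (1 - s) / (3 - s) = r := by
    rw [div_eq_iff (by linarith)]
    have : s * (Real.sqrt 3 - r) = Real.sqrt 3 - 3 * r := by rw [hs, div_mul_cancel₀ _ hd.ne']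
    linarith
  rw [e] at key
  have e2 : u * (r:ℂ) = z := by rw [hu, div_mul_cancel₀ _ hrc]
  simp only [e2] at key
  have : 0 < (h z).re * (4 / (3 - s) ^ 2) := by linarith
  exact pos_of_mul_pos_left this (by positivity)

/-- Package of hypotheses for the one-dimensional slices. -/
structure Slice (φ : ℂ → ℂ) : Prop where
  diff : DifferentiableOn ℂ φ (ball 0 1)
  zero : φ 0 = 0
  deriv0 : deriv φ 0 = 1
  bound : ∀ z ∈ ball (0:ℂ) 1, (1 - ‖z‖ ^ 2) * ‖deriv φ z‖ ≤ 1

lemma sqrt3_lt {z : ℂ} (hz : ‖z‖ < 1 / Real.sqrt 3) : ‖z‖ < 1 := by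
  have : 1 / Real.sqrt 3 < 1 := by
    rw [div_lt_one (by positivity)]
    exact Real.lt_sqrt_of_sq_lt (by norm_num)
  linarith

lemma Slice.hasDerivAt {φ : ℂ → ℂ} (H : Slice φ) {z : ℂ} (hz : ‖z‖ < 1) :
    HasDerivAt φ (deriv φ z) z :=
  (H.diff.differentiableAt (isOpen_ball.mem_nhds (by simpa using hz))).hasDerivAt

lemma Slice.pos {φ : ℂ → ℂ} (H : Slice φ) {z : ℂ} (hz : ‖z‖ < 1 / Real.sqrt 3) :
    0 < (deriv φ z).re :=
  bonk_pos (H.diff.deriv isOpen_ball) H.deriv0 H.bound hz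

lemma Slice.inj {φ : ℂ → ℂ} (H : Slice φ) {a b : ℂ} (ha : ‖a‖ < 1 / Real.sqrt 3)
    (hb : ‖b‖ < 1 / Real.sqrt 3) (hab : φ a = φ b) : a = b := by
  by_contra hne
  have hne' : b - a ≠ 0 := sub_ne_zero.mpr (Ne.symm hne)
  have hmem : ∀ t ∈ Icc (0:ℝ) 1, ‖a + t * (b - a)‖ < 1 / Real.sqrt 3 := by
    intro t ht
    have := (convex_ball (0:ℂ) (1 / Real.sqrt 3)).add_smul_sub_mem
      (by simpa using ha : a ∈ _) (by simpa using hb : b ∈ _) ht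
    simpa using this
  have hder : ∀ t ∈ Icc (0:ℝ) 1, HasDerivAt
      (fun t : ℝ => (φ (a + t * (b - a)) / (b - a)).re) (deriv φ (a + t * (b - a))).re t := by
    intro t ht
    have h1 := H.hasDerivAt (sqrt3_lt (hmem t ht))
    have h2 : HasDerivAt (fun z : ℂ => a + z * (b - a)) (b - a) (t:ℂ) := by
      simpa using ((hasDerivAt_id (t:ℂ)).mul_const (b - a)).const_add a
    have h3 := (HasDerivAt.comp (t:ℂ) h1 h2).div_const (b - a)
    rw [mul_div_cancel_right₀ _ hne'] at h3
    exact h3.real_of_complex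
  have hmono : StrictMonoOn (fun t : ℝ => (φ (a + t * (b - a)) / (b - a)).re) (Icc 0 1) := by
    apply strictMonoOn_of_deriv_pos (convex_Icc 0 1)
    · intro t ht; exact (hder t ht).continuousAt.continuousWithinAt
    · intro t ht
      have ht' := interior_subset ht
      rw [(hder t ht').deriv]
      exact H.pos (hmem t ht')
  have := hmono (by simp) (by simp) zero_lt_one
  simp [hab] at this

lemma Slice.lower {φ : ℂ → ℂ} (H : Slice φ) {s : ℝ} (hs0 : 0 < s) (hs1 : s < 1) :
    Real.sqrt 3 / 4 * (1 - s ^ 2) ≤ ‖φ (Real.sqrt 3 * (1 - s) / (3 - s) : ℝ)‖ := by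
  set Z : ℝ → ℝ := fun s => Real.sqrt 3 * (1 - s) / (3 - s) with hZ
  have q : 0 < Real.sqrt 3 := by positivity
  have qq : Real.sqrt 3 * Real.sqrt 3 = 3 := Real.mul_self_sqrt (by norm_num)
  have hZd : ∀ t ∈ Icc s 1, HasDerivAt Z (-2 * Real.sqrt 3 / (3 - t) ^ 2) t := by
    intro s hs
    have := (((hasDerivAt_id s).const_sub 1).const_mul (Real.sqrt 3)).div
      ((hasDerivAt_id s).const_sub 3) (by simp only [id]; linarith [hs.2])
    refine HasDerivAt.congr_deriv this ?_
    simp only [id]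
    congr 1
    ring
  have hZb : ∀ t ∈ Icc s 1, ‖((Z t : ℝ) : ℂ)‖ < 1 := by
    intro t ht
    have h3 : 0 < 3 - t := by linarith [ht.2]
    have h0 : 0 ≤ Z t := div_nonneg (mul_nonneg q.le (by linarith [ht.2])) h3.le
    rw [Complex.norm_real, Real.norm_eq_abs, abs_of_nonneg h0]
    simp only [hZ]
    rw [div_lt_one h3]
    nlinarith [ht.1, ht.2]
  have hder : ∀ t ∈ Icc s 1, HasDerivAt (fun t : ℝ => (φ (Z t)).re + Real.sqrt 3 / 4 * t ^ 2)
      ((deriv φ (Z t)).re * (-2 * Real.sqrt 3 / (3 - t) ^ 2) + Real.sqrt 3 / 4 * (2 * t)) t := by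
    intro t ht
    have h1 := (H.hasDerivAt (hZb t ht)).real_of_complex
    have h2 := HasDerivAt.comp t h1 (hZd t ht)
    refine h2.add ?_
    simpa using (hasDerivAt_pow 2 t).const_mul (Real.sqrt 3 / 4)
  have hanti : AntitoneOn (fun t : ℝ => (φ (Z t)).re + Real.sqrt 3 / 4 * t ^ 2) (Icc s 1) := by
    apply antitoneOn_of_deriv_nonpos (convex_Icc s 1)
    · intro t ht; exact (hder t ht).continuousAt.continuousWithinAt
    · intro t ht; exact (hder t (interior_subset ht)).differentiableAt.differentiableWithinAt
    · intro t ht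
      rw [(hder t (interior_subset ht)).deriv]
      rw [interior_Icc] at ht
      have := bonk (H.diff.deriv isOpen_ball) H.deriv0 H.bound (s := t) (by linarith [ht.1]) ht.2
      have e : (deriv φ (Z t)).re * (-2 * Real.sqrt 3 / (3 - t) ^ 2) =
        - (Real.sqrt 3 / 2) * ((deriv φ (Z t)).re * (4 / (3 - t) ^ 2)) := by ring
      rw [e]
      nlinarith
  have := hanti (left_mem_Icc.mpr hs1.le) (right_mem_Icc.mpr hs1.le) hs1.le
  have hZ1 : Z 1 = 0 := by simp [hZ]
  simp only [hZ1, Complex.ofReal_zero, H.zero] at this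
  simp at this
  have h2 := Complex.re_le_norm (φ (Z s))
  have : (Real.sqrt 3 / 4 * (1 - s ^ 2)) ≤ ‖φ (Z s)‖ := by nlinarith
  exact this

lemma Slice.rot {φ : ℂ → ℂ} (H : Slice φ) {u : ℂ} (hu : ‖u‖ = 1) :
    Slice (fun z => u⁻¹ * φ (u * z)) := by
  have hu0 : u ≠ 0 := by intro h; simp [h] at hu
  have hd : ∀ z : ℂ, ‖z‖ < 1 → HasDerivAt (fun z => u⁻¹ * φ (u * z)) (deriv φ (u * z)) z := by
    intro z hz
    have h1 := H.hasDerivAt (z := u * z) (by simpa [hu] using hz)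
    have h2 : HasDerivAt (fun z : ℂ => u * z) u z := by
      simpa using (hasDerivAt_id z).const_mul u
    have := (HasDerivAt.comp z h1 h2).const_mul u⁻¹
    refine HasDerivAt.congr_deriv this ?_
    field_simp
  refine ⟨fun z hz => (hd z (by simpa using hz)).differentiableAt.differentiableWithinAt,
    by simp [H.zero], ?_, ?_⟩
  · rw [(hd 0 (by simp)).deriv]; simpa using H.deriv0
  · intro z hz
    rw [mem_ball_zero_iff] at hz
    rw [(hd z hz).deriv]
    simpa [hu] using H.bound (u * z) (by simpa [hu] using hz)

lemma Slice.cover {φ : ℂ → ℂ} (H : Slice φ) {y : ℂ} (hy : ‖y‖ < Real.sqrt 3 / 4) :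
    ∃ z : ℂ, ‖z‖ < 1 / Real.sqrt 3 ∧ φ z = y := by
  have q : 0 < Real.sqrt 3 := by positivity
  have qq : Real.sqrt 3 * Real.sqrt 3 = 3 := Real.mul_self_sqrt (by norm_num)
  obtain ⟨s, hs0, hs1, hs⟩ : ∃ s : ℝ, 0 < s ∧ s < 1 ∧ ‖y‖ < Real.sqrt 3 / 4 * (1 - s ^ 2) := by
    have hc : Tendsto (fun s : ℝ => Real.sqrt 3 / 4 * (1 - s ^ 2)) (𝓝[>] 0)
        (𝓝 (Real.sqrt 3 / 4)) := by
      have : Continuous (fun s : ℝ => Real.sqrt 3 / 4 * (1 - s ^ 2)) := by fun_prop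
      have := (this.tendsto 0).mono_left (nhdsWithin_le_nhds (s := Ioi 0))
      simpa using this
    have h1 : ∀ᶠ s : ℝ in 𝓝[>] 0, s < 1 :=
      (gt_mem_nhds zero_lt_one).filter_mono nhdsWithin_le_nhds
    obtain ⟨s, h1, h2, h3⟩ := (h1.and ((hc.eventually (lt_mem_nhds hy)).and
      self_mem_nhdsWithin)).exists
    exact ⟨s, h3, h1, h2⟩
  set r := Real.sqrt 3 * (1 - s) / (3 - s) with hr
  have h3 : 0 < 3 - s := by linarith
  have hr0 : 0 < r := div_pos (mul_pos q (by linarith)) h3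
  have hr1 : r < 1 / Real.sqrt 3 := by
    rw [hr, div_lt_div_iff₀ h3 q]; nlinarith
  set K := Real.sqrt 3 / 4 * (1 - s ^ 2) with hK
  have hsph : ∀ z : ℂ, ‖z‖ = r → K ≤ ‖φ z‖ := by
    intro z hz
    have hrc : (r:ℂ) ≠ 0 := by exact_mod_cast hr0.ne'
    have hun : ‖z / r‖ = 1 := by
      rw [norm_div, Complex.norm_real, hz, Real.norm_eq_abs, abs_of_pos hr0, div_self hr0.ne']
    have := (H.rot hun).lower hs0 hs1
    rw [← hr, div_mul_cancel₀ _ hrc, norm_mul, norm_inv, hun] at this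
    simpa using this
  have hopen : IsOpen (φ '' ball 0 r) := by
    rw [isOpen_iff_mem_nhds]
    rintro _ ⟨z, hz, rfl⟩
    have hz' : ‖z‖ < r := by simpa using hz
    have hstrict : HasStrictDerivAt φ (deriv φ z) z :=
      (H.diff.analyticAt (isOpen_ball.mem_nhds
        (by simpa using sqrt3_lt (hz'.trans hr1)))).hasStrictDerivAt
    have hne : deriv φ z ≠ 0 := by
      intro h
      have := H.pos (hz'.trans hr1)
      simp [h] at this
    rw [← hstrict.map_nhds_eq hne]
    exact image_mem_map (isOpen_ball.mem_nhds hz)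
  have hcl : closure (φ '' ball 0 r) ⊆ φ '' closedBall 0 r := by
    apply closure_minimal (image_mono ball_subset_closedBall)
    apply IsCompact.isClosed
    apply (isCompact_closedBall (0:ℂ) r).image_of_continuousOn
    intro z hz
    have hz' : ‖z‖ ≤ r := by simpa using hz
    exact (H.hasDerivAt (sqrt3_lt (hz'.trans_lt hr1))).continuousAt.continuousWithinAt
  have hsub : ball (0:ℂ) K ⊆ φ '' ball 0 r := by
    apply (convex_ball (0:ℂ) K).isPreconnected.subset_of_closure_inter_subset hopen
    · refine ⟨0, ?_, 0, by simpa using hr0, H.zero⟩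
      simpa using (norm_nonneg y).trans_lt hs
    · rintro w ⟨hw1, hw2⟩
      obtain ⟨z, hz, rfl⟩ := hcl hw1
      refine ⟨z, ?_, rfl⟩
      rw [mem_closedBall_zero_iff] at hz
      rw [mem_ball_zero_iff] at hw2 ⊢
      rcases hz.lt_or_eq with h | h
      · exact h
      · exact absurd (hsph z h) (not_le.mpr hw2)
  obtain ⟨z, hz, hzy⟩ := hsub (by simpa using hs : y ∈ ball (0:ℂ) K)
  exact ⟨z, (by simpa using hz : ‖z‖ < r).trans hr1, hzy⟩

lemma strict_of_holo {X : Type*} [NormedAddCommGroup X] [NormedSpace ℂ X]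
    {f : X → ℂ} (hf : DifferentiableOn ℂ f (ball (0 : X) 1)) {x : X} (hx : x ∈ ball (0 : X) 1) :
    HasStrictFDerivAt f (fderiv ℂ f x) x := by
  have hnhds := isOpen_ball.mem_nhds hx
  have hcont : ContinuousAt f x := (hf.differentiableAt hnhds).continuousAt
  -- a ball where `f` stays within distance one of `f x`
  obtain ⟨R, hR, hRs⟩ : ∃ R > 0, ∀ y ∈ ball x R, y ∈ ball (0 : X) 1 ∧ dist (f y) (f x) < 1 := by
    have h1 : ∀ᶠ y in 𝓝 x, dist (f y) (f x) < 1 := hcont (ball_mem_nhds _ one_pos)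
    exact Metric.eventually_nhds_iff_ball.mp ((show ∀ᶠ y in 𝓝 x, y ∈ ball (0 : X) 1 from hnhds).and h1)
  set r := R / 4 with hr
  have hr0 : 0 < r := by positivity
  have hlip : ∀ a b, dist a x < 2 * r → dist b a < 2 * r → dist (f b) (f a) ≤ 2 / (2 * r) * dist b a := by
    intro a b ha hb
    have hsub : ∀ y ∈ ball a (2 * r), y ∈ ball x R := by
      intro y hy
      rw [mem_ball] at hy ⊢
      have := dist_triangle y a x
      linarith
    refine Complex.dist_le_div_mul_dist_of_mapsTo_ball
      (hf.mono fun y hy => (hRs y (hsub y hy)).1) ?_ (mem_ball.mpr hb)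
    intro y hy
    rw [mem_closedBall]
    have h1 := (hRs y (hsub y hy)).2
    have h2 := (hRs a (hsub a (by simpa using hr0))).2
    have := dist_triangle_right (f y) (f a) (f x)
    linarith
  have hC : ContinuousAt (fderiv ℂ f) x := by
    rw [ContinuousAt, tendsto_iff_dist_tendsto_zero]
    have hlim : Tendsto (fun y => (2 * (2 / (2 * r) * dist y x)) / r) (𝓝 x) (𝓝 0) := by
      have : Continuous (fun y => (2 * (2 / (2 * r) * dist y x)) / r) := by fun_prop
      simpa using this.tendsto x
    refine squeeze_zero' (Eventually.of_forall fun _ => dist_nonneg) ?_ hlim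
    filter_upwards [ball_mem_nhds x hr0] with y hy
    rw [mem_ball] at hy
    set d := y - x with hd
    have hdn : dist y x = ‖d‖ := dist_eq_norm _ _
    have hmem1 : ∀ z ∈ ball x r, z ∈ ball (0 : X) 1 := by
      intro z hz
      refine (hRs z ?_).1
      rw [mem_ball] at hz ⊢; linarith
    have hmem2 : ∀ z ∈ ball x r, z + d ∈ ball (0 : X) 1 := by
      intro z hz
      refine (hRs _ ?_).1
      rw [mem_ball] at hz ⊢
      have h1 : dist (z + d) z = ‖d‖ := by simp [dist_eq_norm]
      have := dist_triangle (z + d) z x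
      linarith
    have hD : DifferentiableOn ℂ (fun z => f (z + d) - f z) (ball x r) := by
      refine DifferentiableOn.sub ?_ (hf.mono hmem1)
      exact hf.comp (by fun_prop) hmem2
    have hsmall : ∀ z ∈ ball x r, ‖f (z + d) - f z‖ ≤ 2 / (2 * r) * dist y x := by
      intro z hz
      rw [mem_ball] at hz
      have h1 : dist (z + d) z = dist y x := by rw [hdn]; simp [dist_eq_norm]
      have := hlip z (z + d) (by linarith) (by linarith)
      rwa [h1, dist_eq_norm] at this
    have := Complex.norm_fderiv_le_div_of_mapsTo_ball (R₂ := 2 * (2 / (2 * r) * dist y x)) hD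
      (fun z hz => by
        rw [mem_closedBall]
        have h1 := hsmall z hz
        have h2 := hsmall x (mem_ball_self hr0)
        have := dist_le_norm_add_norm (f (z + d) - f z) (f (x + d) - f x)
        linarith) hr0
    have e : fderiv ℂ (fun z => f (z + d) - f z) x = fderiv ℂ f y - fderiv ℂ f x := by
      have hxd : x + d = y := by simp [hd]
      have hy1 : DifferentiableAt ℂ f (x + d) :=
        hf.differentiableAt (isOpen_ball.mem_nhds (hmem2 x (mem_ball_self hr0)))
      have hx1 : DifferentiableAt ℂ f x := hf.differentiableAt hnhds
      have h1 : HasFDerivAt (fun z => f (z + d)) (fderiv ℂ f (x + d)) x :=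
        (hasFDerivAt_comp_add_right d).mpr hy1.hasFDerivAt
      have h2 : HasFDerivAt (fun z => f (z + d) - f z) (fderiv ℂ f (x + d) - fderiv ℂ f x) x :=
        h1.sub hx1.hasFDerivAt
      rw [h2.fderiv, hxd]
    rw [e] at this
    rwa [dist_eq_norm]
  refine hasStrictFDerivAt_of_hasFDerivAt_of_continuousAt ?_ hC
  filter_upwards [hnhds] with y hy
  exact (hf.differentiableAt (isOpen_ball.mem_nhds hy)).hasFDerivAt

section
variable {X : Type*} [NormedAddCommGroup X] [NormedSpace ℂ X]

lemma F_strict {f : X → ℂ} (hf : DifferentiableOn ℂ f (ball (0 : X) 1))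
    {F : X → X} (hF : ∀ x ∈ ball (0 : X) 1, F x = f x • x) {x : X} (hx : x ∈ ball (0 : X) 1) :
    HasStrictFDerivAt F (f x • ContinuousLinearMap.id ℂ X + (fderiv ℂ f x).smulRight x) x := by
  have h := (strict_of_holo hf hx).smul (hasStrictFDerivAt_id x)
  refine h.congr_of_eventuallyEq ?_
  filter_upwards [isOpen_ball.mem_nhds hx] with y hy
  exact (hF y hy).symm

lemma bloch_bound {F : X → X} (hB : blochNorm F = 1) (hF0 : F 0 = 0) {x : X}
    (hx : x ∈ ball (0 : X) 1) (hx0 : x ≠ 0) :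
    (1 - ‖x‖ ^ 2) * ‖fderiv ℂ F x x‖ / ‖x‖ ≤ 1 := by
  unfold blochNorm at hB
  rw [hF0, norm_zero, zero_add] at hB
  have hbdd : BddAbove (range fun x : {x : X // x ∈ ball (0 : X) 1 ∧ x ≠ 0} =>
      (1 - ‖x.1‖ ^ 2) * ‖fderiv ℂ F x.1 x.1‖ / ‖x.1‖) := by
    by_contra h
    rw [Real.iSup_of_not_bddAbove h] at hB
    exact zero_ne_one hB
  exact (le_ciSup hbdd (⟨x, hx, hx0⟩ : {x : X // x ∈ ball (0 : X) 1 ∧ x ≠ 0})).trans hB.le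

lemma slice_deriv {f : X → ℂ} (hf : DifferentiableOn ℂ f (ball (0 : X) 1)) {u : X}
    (hu : ‖u‖ = 1) {z : ℂ} (hz : ‖z‖ < 1) :
    HasDerivAt (fun z : ℂ => z * f (z • u)) (f (z • u) + z * fderiv ℂ f (z • u) u) z := by
  have hm : z • u ∈ ball (0 : X) 1 := by simpa [norm_smul, hu] using hz
  have h1 := (hf.differentiableAt (isOpen_ball.mem_nhds hm)).hasFDerivAt
  have h2 : HasDerivAt (fun z : ℂ => z • u) u z := by
    simpa using (hasDerivAt_id z).smul_const u
  have h3 := h1.comp_hasDerivAt z h2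
  refine HasDerivAt.congr_deriv ((hasDerivAt_id z).mul h3) ?_
  simp

lemma slice_of {f : X → ℂ} (hf : DifferentiableOn ℂ f (ball (0 : X) 1)) (hf0 : f 0 = 1)
    {F : X → X} (hF : ∀ x ∈ ball (0 : X) 1, F x = f x • x)
    (hB : blochNorm F = 1) {u : X} (hu : ‖u‖ = 1) : Slice (fun z : ℂ => z * f (z • u)) := by
  have hF0 : F 0 = 0 := by simpa using hF 0 (by simp)
  refine ⟨fun z hz => ?_, by simp, ?_, ?_⟩
  · exact (slice_deriv hf hu (by simpa using hz)).differentiableAt.differentiableWithinAt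
  · rw [(slice_deriv hf hu (by simp)).deriv]; simp [hf0]
  · intro z hz
    have hz1 : ‖z‖ < 1 := by simpa using hz
    rw [(slice_deriv hf hu hz1).deriv]
    rcases eq_or_ne z 0 with rfl | hz0
    · simp [hf0]
    have hm : z • u ∈ ball (0 : X) 1 := by simpa [norm_smul, hu] using hz1
    have hu0 : u ≠ 0 := by intro h; simp [h] at hu
    have := bloch_bound hB hF0 hm (smul_ne_zero hz0 hu0)
    rw [(F_strict hf hF hm).hasFDerivAt.fderiv] at this
    have e : (f (z • u) • ContinuousLinearMap.id ℂ X +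
        (fderiv ℂ f (z • u)).smulRight (z • u)) (z • u) =
        (z * (f (z • u) + z * fderiv ℂ f (z • u) u)) • u := by
      simp only [_root_.add_apply, _root_.smul_apply,
        ContinuousLinearMap.id_apply, ContinuousLinearMap.smulRight_apply, map_smul, smul_eq_mul,
        smul_smul, ← add_smul]
      congr 1; ring
    rw [e] at this
    simp only [norm_smul, hu, mul_one, norm_mul] at this
    have hzn : ‖z‖ ≠ 0 := norm_ne_zero_iff.mpr hz0
    rwa [mul_left_comm, mul_div_cancel_left₀ _ hzn] at this

lemma unit_dir {x : X} (hx : x ≠ 0) :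
    ∃ u : X, ‖u‖ = 1 ∧ ((‖x‖ : ℝ) : ℂ) • u = x := by
  have h : ((‖x‖ : ℝ) : ℂ) ≠ 0 := by exact_mod_cast norm_ne_zero_iff.mpr hx
  refine ⟨((‖x‖ : ℝ) : ℂ)⁻¹ • x, ?_, smul_inv_smul₀ h x⟩
  rw [norm_smul, norm_inv, Complex.norm_real, norm_norm, inv_mul_cancel₀ (norm_ne_zero_iff.mpr hx)]

lemma f_ne {f : X → ℂ} (hf : DifferentiableOn ℂ f (ball (0 : X) 1)) (hf0 : f 0 = 1)
    {F : X → X} (hF : ∀ x ∈ ball (0 : X) 1, F x = f x • x)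
    (hB : blochNorm F = 1) {x : X} (hx : ‖x‖ < 1 / Real.sqrt 3) :
    f x ≠ 0 ∧ f x + fderiv ℂ f x x ≠ 0 := by
  rcases eq_or_ne x 0 with rfl | hx0
  · simp [hf0]
  obtain ⟨u, hu, hux⟩ := unit_dir hx0
  have H := slice_of hf hf0 hF hB hu
  have hn : ‖((‖x‖ : ℝ) : ℂ)‖ < 1 / Real.sqrt 3 := by simpa using hx
  constructor
  · intro h
    have := H.inj (a := ((‖x‖ : ℝ) : ℂ)) (b := 0) hn (by simp) (by simp [hux, h])
    exact hx0 (by simpa using this)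
  · intro h
    have h1 := H.pos hn
    rw [(slice_deriv hf hu (sqrt3_lt hn)).deriv, hux] at h1
    have : ((‖x‖ : ℝ) : ℂ) * fderiv ℂ f x u = fderiv ℂ f x x := by
      conv_rhs => rw [← hux, map_smul, smul_eq_mul, hux]
    rw [this, h] at h1
    simp at h1

lemma rank_one_bij {c : ℂ} {L : X →L[ℂ] ℂ} {x : X} (h1 : c ≠ 0) (h2 : c + L x ≠ 0) :
    Function.Bijective (c • ContinuousLinearMap.id ℂ X + L.smulRight x) := by
  constructor
  · rw [injective_iff_map_eq_zero]
    intro v hv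
    have hv' : c • v + L v • x = 0 := by simpa using hv
    have h3 : L v * (c + L x) = 0 := by
      have := congrArg L hv'
      simp at this
      linear_combination this
    have h4 : L v = 0 := (mul_eq_zero.mp h3).resolve_right h2
    rw [h4, zero_smul, add_zero] at hv'
    exact (smul_eq_zero.mp hv').resolve_left h1
  · intro w
    refine ⟨c⁻¹ • (w - (L w / (c + L x)) • x), ?_⟩
    change c • (c⁻¹ • (w - (L w / (c + L x)) • x)) + L (c⁻¹ • (w - (L w / (c + L x)) • x)) • x = w
    rw [L.map_smul, L.map_sub, L.map_smul, smul_eq_mul, smul_eq_mul]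
    rw [smul_inv_smul₀ h1]
    have : c⁻¹ * (L w - L w / (c + L x) * L x) = L w / (c + L x) := by
      field_simp
      ring
    rw [this]
    simp

end

/-- **Lower bound for the Bloch constant.** Let `F(x) = f(x)·x` on the unit ball `𝔹` of a
complex Banach space, with `f` holomorphic, `f(0) = 1` and `‖F‖_B = 1`. Then `F` is
biholomorphic on the ball `B_{1/√3}` and `F(B_{1/√3})` contains the ball `B_{√3/4}`. -/
theorem stmt16 {X : Type*} [NormedAddCommGroup X] [NormedSpace ℂ X] [CompleteSpace X]
    (f : X → ℂ) (hf : DifferentiableOn ℂ f (ball (0 : X) 1)) (hf0 : f 0 = 1)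
    (F : X → X) (hF : ∀ x ∈ ball (0 : X) 1, F x = f x • x)
    (hB : blochNorm F = 1) :
    IsBiholoOn F (ball (0 : X) (1 / Real.sqrt 3)) ∧
      ball (0 : X) (Real.sqrt 3 / 4) ⊆ F '' ball (0 : X) (1 / Real.sqrt 3) := by
  have hlt : 1 / Real.sqrt 3 < 1 := by
    rw [div_lt_one (by positivity)]
    exact Real.lt_sqrt_of_sq_lt (by norm_num)
  have hsub : ball (0 : X) (1 / Real.sqrt 3) ⊆ ball (0 : X) 1 := ball_subset_ball hlt.le
  have hinj : InjOn F (ball (0 : X) (1 / Real.sqrt 3)) := by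
    intro a ha b hb hab
    have ha1 : ‖a‖ < 1 / Real.sqrt 3 := by simpa using ha
    have hb1 : ‖b‖ < 1 / Real.sqrt 3 := by simpa using hb
    rw [hF a (hsub ha), hF b (hsub hb)] at hab
    have hfb := (f_ne hf hf0 hF hB hb1).1
    rcases eq_or_ne a 0 with rfl | ha0
    · rw [smul_zero] at hab
      exact ((smul_eq_zero.mp hab.symm).resolve_left hfb).symm
    obtain ⟨u, hu, hua⟩ := unit_dir ha0
    have hu0 : u ≠ 0 := by intro h; simp [h] at hu
    set z : ℂ := (f b)⁻¹ * f a * ((‖a‖ : ℝ) : ℂ) with hz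
    have hzb : z • u = b := by
      rw [hz, mul_smul, hua, mul_smul, hab, inv_smul_smul₀ hfb]
    have hzn : ‖z‖ < 1 / Real.sqrt 3 := by
      rw [← hzb, norm_smul, hu, mul_one] at hb1
      exact hb1
    have := (slice_of hf hf0 hF hB hu).inj (a := ((‖a‖ : ℝ) : ℂ)) (b := z)
      (by simpa using ha1) hzn (by
        simp only [hua, hzb]
        rw [hz]
        field_simp)
    rw [← hua, ← hzb, this]
  refine ⟨⟨?_, hinj, ?_⟩, ?_⟩
  · intro x hx
    exact (F_strict hf hF (hsub hx)).hasFDerivAt.differentiableAt.differentiableWithinAt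
  · refine ⟨Function.invFunOn F (ball (0 : X) (1 / Real.sqrt 3)), ?_,
      fun x hx => hinj.leftInvOn_invFunOn hx⟩
    rintro _ ⟨x, hx, rfl⟩
    have hx1 : ‖x‖ < 1 / Real.sqrt 3 := by simpa using hx
    have hbij := rank_one_bij (f_ne hf hf0 hF hB hx1).1 (f_ne hf hf0 hF hB hx1).2
    let A : X ≃L[ℂ] X := ContinuousLinearEquiv.ofBijective
      (f x • ContinuousLinearMap.id ℂ X + (fderiv ℂ f x).smulRight x)
      (LinearMap.ker_eq_bot.mpr hbij.1) (LinearMap.range_eq_top.mpr hbij.2)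
    have hA : HasStrictFDerivAt F (A : X →L[ℂ] X) x := by
      have e : (A : X →L[ℂ] X) =
        f x • ContinuousLinearMap.id ℂ X + (fderiv ℂ f x).smulRight x :=
        ContinuousLinearEquiv.coe_ofBijective _ _ _
      rw [e]
      exact F_strict hf hF (hsub hx)
    have hloc := hA.to_localInverse
    have hval : hA.localInverse F A x (F x) = x := hA.localInverse_apply_image
    have hmem : ∀ᶠ y in 𝓝 (F x), hA.localInverse F A x y ∈ ball (0 : X) (1 / Real.sqrt 3) := by
      apply hloc.continuousAt
      rw [hval]
      exact isOpen_ball.mem_nhds hx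
    have heq : Function.invFunOn F (ball (0 : X) (1 / Real.sqrt 3)) =ᶠ[𝓝 (F x)]
        hA.localInverse F A x := by
      filter_upwards [hmem, hA.eventually_right_inverse] with y hy1 hy2
      conv_lhs => rw [← hy2]
      exact hinj.leftInvOn_invFunOn hy1
    exact (hloc.hasFDerivAt.differentiableAt.congr_of_eventuallyEq heq).differentiableWithinAt
  · intro y hy
    rw [mem_ball_zero_iff] at hy
    rcases eq_or_ne y 0 with rfl | hy0
    · exact ⟨0, by simp, by simpa using hF 0 (by simp)⟩
    obtain ⟨u, hu, huy⟩ := unit_dir hy0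
    obtain ⟨z, hz, hzy⟩ := (slice_of hf hf0 hF hB hu).cover (y := ((‖y‖ : ℝ) : ℂ))
      (by simpa using hy)
    have hm : z • u ∈ ball (0 : X) (1 / Real.sqrt 3) := by
      rw [mem_ball_zero_iff, norm_smul, hu, mul_one]; exact hz
    refine ⟨z • u, hm, ?_⟩
    rw [hF _ (hsub hm), smul_smul, mul_comm, hzy, huy]
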